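/- arXiv:2103.01191 — 8 statements merged into one kernel-verified Lean document; each statement's English description precedes it below -/
import Mathlib

section
/- For all points p = (t_p, x_p) and q = (t_q, x_q) in ℝ × ℝⁿ, the following four conditions are equivalent: (i) ‖x_q − x_p‖ ≤ t_q − t_p (i.e. p ≤ q in the causal relation of Minkowski space); (ii) d^N(p,q) = t_q − t_p; (iii) d^R(p,q) ≤ √2·(t_q − t_p); (iv) d^E(p,q) ≤ 2·(t_q − t_p). -/
/-!
The conditions see `p` and `q` only through `t = t_q - t_p` and `r = ‖x_q - x_p‖ ≥ 0`. Each of them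
forces `0 ≤ t`, because its left-hand side is nonnegative; once `0 ≤ t`, the absolute value
disappears and each reduces to `r ≤ t`, for the Riemannianized distance after squaring.
-/

section OrderedAddCommGroup

variable {α : Type*} [AddCommGroup α] [LinearOrder α] [IsOrderedAddMonoid α] {r t : α}

theorem max_abs_eq_self_iff_le (hr : 0 ≤ r) : max |t| r = t ↔ r ≤ t := by
  refine ⟨fun h => (le_max_right _ _).trans h.le, fun h => ?_⟩
  rw [abs_of_nonneg (hr.trans h), max_eq_left h]

theorem abs_add_le_add_self_iff_le (hr : 0 ≤ r) : |t| + r ≤ t + t ↔ r ≤ t := by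
  refine ⟨fun h => ?_, fun h => ?_⟩
  · exact le_of_add_le_add_left ((add_le_add_left (le_abs_self t) r).trans h)
  · rw [abs_of_nonneg (hr.trans h)]
    exact add_le_add_right h t

end OrderedAddCommGroup

theorem sqrt_sq_add_sq_le_sqrt_two_mul_iff_le {r t : ℝ} (hr : 0 ≤ r) :
    √(t ^ 2 + r ^ 2) ≤ √2 * t ↔ r ≤ t := by
  rcases lt_or_ge t 0 with ht | ht
  · have h_neg : √2 * t < 0 := mul_neg_of_pos_of_neg (Real.sqrt_pos.2 two_pos) ht
    exact iff_of_false (h_neg.trans_le (Real.sqrt_nonneg _)).not_ge (ht.trans_le hr).not_ge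
  · calc √(t ^ 2 + r ^ 2) ≤ √2 * t
        ↔ √(t ^ 2 + r ^ 2) ≤ √(2 * t ^ 2) := by
          rw [Real.sqrt_mul zero_le_two, Real.sqrt_sq ht]
      _ ↔ t ^ 2 + r ^ 2 ≤ 2 * t ^ 2 := Real.sqrt_le_sqrt_iff (by positivity)
      _ ↔ r ^ 2 ≤ t ^ 2 := by rw [two_mul, add_le_add_iff_left]
      _ ↔ r ≤ t := sq_le_sq₀ hr ht

theorem minkowski_causal_characterizations_general {E : Type*} [SeminormedAddGroup E]
    (tp tq : ℝ) (xp xq : E) :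
    (‖xq - xp‖ ≤ tq - tp ↔ max |tq - tp| ‖xq - xp‖ = tq - tp) ∧
    (‖xq - xp‖ ≤ tq - tp ↔ √((tq - tp) ^ 2 + ‖xq - xp‖ ^ 2) ≤ √2 * (tq - tp)) ∧
    (‖xq - xp‖ ≤ tq - tp ↔ |tq - tp| + ‖xq - xp‖ ≤ 2 * (tq - tp)) :=
  have hr : 0 ≤ ‖xq - xp‖ := norm_nonneg _
  ⟨(max_abs_eq_self_iff_le hr).symm,
    (sqrt_sq_add_sq_le_sqrt_two_mul_iff_le hr).symm,
    by rw [two_mul, abs_add_le_add_self_iff_le hr]⟩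

/-- On Minkowski space, the causal relation `p ≤ q` is characterized
equivalently by the null distance (equality), the Riemannianized distance (`≤ √2·Δt`),
and the elevator distance (`≤ 2·Δt`). -/
theorem minkowski_causal_characterizations (n : ℕ) (tp tq : ℝ)
    (xp xq : EuclideanSpace ℝ (Fin n)) :
    (‖xq - xp‖ ≤ tq - tp ↔ max |tq - tp| ‖xq - xp‖ = tq - tp) ∧
    (‖xq - xp‖ ≤ tq - tp ↔
      Real.sqrt ((tq - tp) ^ 2 + ‖xq - xp‖ ^ 2) ≤ Real.sqrt 2 * (tq - tp)) ∧
    (‖xq - xp‖ ≤ tq - tp ↔ |tq - tp| + ‖xq - xp‖ ≤ 2 * (tq - tp)) :=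
  minkowski_causal_characterizations_general tp tq xp xq
end

section
/- Let d be a metric on M = I × S as in the GRW setup, with f continuous, and suppose d satisfies (F6) with constant C₆. Then for all p,q ∈ M with t_p ≤ t_q, one has C₆·min{t_q − t_p, A_{[t_p,t_q]}·d_S(p_S,q_S)} ≤ d(p,q), where A_{[t_p,t_q]} := inf{f(t) : t_p ≤ t ≤ t_q}. -/
/-- A (definite) metric given as a plain distance function on a set. -/
def IsMetric {X : Type*} (d : X → X → ℝ) : Prop :=
  (∀ p q, 0 ≤ d p q) ∧ (∀ p, d p p = 0) ∧ (∀ p q, d p q = 0 → p = q) ∧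
    (∀ p q, d p q = d q p) ∧ (∀ p q r, d p r ≤ d p q + d q r)

/-- The underlying set `M = I × S` of a GRW spacetime, where `I = (a,b) ⊆ ℝ` with
`-∞ ≤ a < b ≤ ∞`. -/
abbrev GRWPoint (a b : EReal) (S : Type*) : Type _ :=
  {t : ℝ // a < (t : EReal) ∧ (t : EReal) < b} × S

/-- The vertical exit cost `E_{(t₁,t₂)}(t_p,t_q) ∈ (0,∞]` of the slab `(t₁,t₂) × S`
inside the interval `(a,b)`. -/
noncomputable def exitCost (a b : EReal) (t₁ t₂ tp tq : ℝ) : EReal :=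
  if a < (t₁ : EReal) then
    (if (t₂ : EReal) < b then ((min (tp + tq - 2 * t₁) (2 * t₂ - tp - tq) : ℝ) : EReal)
     else ((tp + tq - 2 * t₁ : ℝ) : EReal))
  else
    (if (t₂ : EReal) < b then ((2 * t₂ - tp - tq : ℝ) : EReal) else (⊤ : EReal))

/-!
Apply (F6) to the slabs `(t_p - ε, t_q + ε) × S` with `ε ↓ 0`. Their exit cost is exactly
`t_q - t_p + 2ε`, and the infimum of `f` over `(t_p - ε, t_q + ε)` converges to its infimum over
`[t_p, t_q]`: lower semicontinuity keeps `f` above any constant smaller than the latter on a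
neighbourhood of `[t_p, t_q]`.
-/

open Filter Set Topology

theorem lowerSemicontinuousAt_of_isOpen {X α : Type*} [TopologicalSpace X] [Preorder α]
    {f : X → α} {U : Set X} {x : X} (hf : LowerSemicontinuousOn f U) (hU : IsOpen U) (hx : x ∈ U) :
    LowerSemicontinuousAt f x :=
  fun c hc ↦ hU.nhdsWithin_eq hx ▸ hf x hx c hc

theorem tendsto_const_sub_nhdsGT_zero {G : Type*} [AddGroup G] [Preorder G] [AddLeftStrictMono G]
    [TopologicalSpace G] [ContinuousSub G] (x : G) :
    Tendsto (fun ε ↦ x - ε) (𝓝[>] 0) (𝓝[<] x) := by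
  have hcont : Continuous (fun ε : G ↦ x - ε) := by fun_prop
  refine tendsto_nhdsWithin_iff.2 ⟨?_, eventually_mem_nhdsWithin.mono fun _ hε ↦ sub_lt_self x hε⟩
  exact tendsto_nhdsWithin_of_tendsto_nhds (hcont.tendsto' 0 x (sub_zero x))

theorem tendsto_const_add_nhdsGT_zero {M : Type*} [AddZeroClass M] [Preorder M]
    [AddLeftStrictMono M] [TopologicalSpace M] [ContinuousAdd M] (x : M) :
    Tendsto (fun ε ↦ x + ε) (𝓝[>] 0) (𝓝[>] x) := by
  have hcont : Continuous (fun ε : M ↦ x + ε) := by fun_prop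
  refine tendsto_nhdsWithin_iff.2
    ⟨?_, eventually_mem_nhdsWithin.mono fun _ hε ↦ lt_add_of_pos_right x hε⟩
  exact tendsto_nhdsWithin_of_tendsto_nhds (hcont.tendsto' 0 x (add_zero x))

theorem tendsto_sInf_image_of_lowerSemicontinuousAt {ι X α : Type*} [TopologicalSpace X]
    [ConditionallyCompleteLinearOrder α] [DenselyOrdered α] [NoMinOrder α]
    [TopologicalSpace α] [OrderTopology α] {f : X → α} {K : Set X} {l : Filter ι} {s : ι → Set X}
    (hK : K.Nonempty) (hbdd : BddBelow (f '' K)) (hf : ∀ x ∈ K, LowerSemicontinuousAt f x)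
    (hKs : ∀ᶠ i in l, K ⊆ s i) (hs : Tendsto s l (𝓝ˢ K).smallSets) :
    Tendsto (fun i ↦ sInf (f '' s i)) l (𝓝 (sInf (f '' K))) := by
  have eventually_forall_lt : ∀ c < sInf (f '' K), ∀ᶠ i in l, ∀ x ∈ s i, c < f x := by
    intro c hc
    refine tendsto_smallSets_iff.1 hs {x | c < f x} (mem_nhdsSet_iff_forall.2 fun x hx ↦ ?_)
    exact hf x hx c (hc.trans_le (csInf_le hbdd (mem_image_of_mem f hx)))
  refine tendsto_order.2 ⟨fun c hc ↦ ?_, fun c hc ↦ ?_⟩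
  · obtain ⟨c', hcc', hc'⟩ := exists_between hc
    filter_upwards [hKs, eventually_forall_lt c' hc'] with i hi hlt
    exact hcc'.trans_le
      (le_csInf ((hK.mono hi).image f) (forall_mem_image.2 fun x hx ↦ (hlt x hx).le))
  · obtain ⟨m, hm⟩ := exists_lt (sInf (f '' K))
    filter_upwards [hKs, eventually_forall_lt m hm] with i hi hlt
    have hbdd_i : BddBelow (f '' s i) := ⟨m, forall_mem_image.2 fun x hx ↦ (hlt x hx).le⟩
    exact (csInf_le_csInf hbdd_i (hK.image f) (image_mono hi)).trans_lt hc

theorem tendsto_Icc_smallSets_nhdsSet_Icc {ι α : Type*} [LinearOrder α] [NoMinOrder α]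
    [NoMaxOrder α] [TopologicalSpace α] [OrderTopology α] {l : Filter ι} {u v : ι → α} {x y : α}
    (hxy : x ≤ y) (hu : Tendsto u l (𝓝 x)) (hv : Tendsto v l (𝓝 y)) :
    Tendsto (fun i ↦ Icc (u i) (v i)) l (𝓝ˢ (Icc x y)).smallSets := by
  refine tendsto_smallSets_iff.2 fun t ht ↦ ?_
  have ht_nhds : ∀ z ∈ Icc x y, t ∈ 𝓝 z := mem_nhdsSet_iff_forall.1 ht
  obtain ⟨x', hx', hx't⟩ :=
    exists_Ioc_subset_of_mem_nhds (ht_nhds x (left_mem_Icc.2 hxy)) (exists_lt x)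
  obtain ⟨y', hy', hty'⟩ :=
    exists_Ico_subset_of_mem_nhds (ht_nhds y (right_mem_Icc.2 hxy)) (exists_gt y)
  filter_upwards [hu.eventually_const_lt hx', hv.eventually_lt_const hy'] with i hui hvi z hz
  rcases le_total z x with hzx | hxz
  · exact hx't ⟨hui.trans_le hz.1, hzx⟩
  rcases le_total y z with hyz | hzy
  · exact hty' ⟨hyz, hz.2.trans_lt hvi⟩
  · exact subset_of_mem_nhdsSet ht ⟨hxz, hzy⟩

theorem tendsto_sInf_image_Ioo_of_lowerSemicontinuousAt {ι β α : Type*} [LinearOrder β]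
    [NoMinOrder β] [NoMaxOrder β] [TopologicalSpace β] [OrderTopology β] [CompactIccSpace β]
    [ConditionallyCompleteLinearOrder α] [DenselyOrdered α] [NoMinOrder α]
    [TopologicalSpace α] [OrderTopology α] {f : β → α} {l : Filter ι} {u v : ι → β} {x y : β}
    (hxy : x ≤ y) (hf : ∀ z ∈ Icc x y, LowerSemicontinuousAt f z)
    (hu : Tendsto u l (𝓝[<] x)) (hv : Tendsto v l (𝓝[>] y)) :
    Tendsto (fun i ↦ sInf (f '' Ioo (u i) (v i))) l (𝓝 (sInf (f '' Icc x y))) := by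
  have hne : (Icc x y).Nonempty := nonempty_Icc.2 hxy
  have : Nonempty α := (hne.image f).to_type
  have hbdd : BddBelow (f '' Icc x y) :=
    LowerSemicontinuousOn.bddBelow_of_isCompact isCompact_Icc
      fun z hz ↦ (hf z hz).lowerSemicontinuousWithinAt _
  have hsub : ∀ᶠ i in l, Icc x y ⊆ Ioo (u i) (v i) := by
    filter_upwards [hu.eventually self_mem_nhdsWithin, hv.eventually self_mem_nhdsWithin]
      with i hui hvi using Icc_subset_Ioo hui hvi
  have hsmall : Tendsto (fun i ↦ Ioo (u i) (v i)) l (𝓝ˢ (Icc x y)).smallSets :=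
    (tendsto_Icc_smallSets_nhdsSet_Icc hxy (tendsto_nhds_of_tendsto_nhdsWithin hu)
      (tendsto_nhds_of_tendsto_nhdsWithin hv)).smallSets_mono
      (Eventually.of_forall fun _ ↦ Ioo_subset_Icc_self)
  exact tendsto_sInf_image_of_lowerSemicontinuousAt hne hbdd hf hsub hsmall

theorem coe_mul_min_exitCost_le_iff {a b : EReal} {t₁ t₂ tp tq C r s : ℝ}
    (ht₁ : a < (t₁ : EReal)) (ht₂ : (t₂ : EReal) < b) :
    (C : EReal) * min (exitCost a b t₁ t₂ tp tq) (r : EReal) ≤ (s : EReal) ↔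
      C * min (min (tp + tq - 2 * t₁) (2 * t₂ - tp - tq)) r ≤ s := by
  rw [exitCost, if_pos ht₁, if_pos ht₂, ← EReal.coe_strictMono.monotone.map_min, ← EReal.coe_mul,
    EReal.coe_le_coe_iff]

theorem F6_lower_bound_general {S : Type*} (dS : S → S → ℝ) (a b : EReal) (f : ℝ → ℝ)
    (hf : LowerSemicontinuousOn f {t : ℝ | a < (t : EReal) ∧ (t : EReal) < b})
    (d : GRWPoint a b S → GRWPoint a b S → ℝ) (C₆ : ℝ)
    (hF6 : ∀ t₁ t₂ : ℝ, a < (t₁ : EReal) → (t₂ : EReal) < b → t₁ < t₂ →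
      ∀ p q : GRWPoint a b S, t₁ < (p.1 : ℝ) → (p.1 : ℝ) < t₂ →
        t₁ < (q.1 : ℝ) → (q.1 : ℝ) < t₂ →
      C₆ * min (min ((p.1 : ℝ) + q.1 - 2 * t₁) (2 * t₂ - p.1 - q.1))
          (sInf (f '' Ioo t₁ t₂) * dS p.2 q.2) ≤ d p q)
    (p q : GRWPoint a b S) (hpq : (p.1 : ℝ) ≤ (q.1 : ℝ)) :
    C₆ * min ((q.1 : ℝ) - (p.1 : ℝ))
      (sInf (f '' Icc (p.1 : ℝ) (q.1 : ℝ)) * dS p.2 q.2) ≤ d p q := by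
  set I : Set ℝ := {t : ℝ | a < (t : EReal) ∧ (t : EReal) < b}
  have hI : IsOpen I := isOpen_Ioo.preimage continuous_coe_real_ereal
  have hpqI : Icc (p.1 : ℝ) q.1 ⊆ I := fun t ht ↦
    ⟨p.1.2.1.trans_le (EReal.coe_le_coe_iff.2 ht.1), (EReal.coe_le_coe_iff.2 ht.2).trans_lt q.1.2.2⟩
  have hlow := tendsto_const_sub_nhdsGT_zero (p.1 : ℝ)
  have hhigh := tendsto_const_add_nhdsGT_zero (q.1 : ℝ)
  have hcost : Tendsto (fun ε : ℝ ↦ (q.1 : ℝ) - p.1 + 2 * ε) (𝓝[>] 0) (𝓝 ((q.1 : ℝ) - p.1)) :=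
    tendsto_nhdsWithin_of_tendsto_nhds <| Continuous.tendsto' (by fun_prop) _ _ (by simp)
  have hinf := tendsto_sInf_image_Ioo_of_lowerSemicontinuousAt hpq
    (fun t ht ↦ lowerSemicontinuousAt_of_isOpen hf hI (hpqI ht)) hlow hhigh
  refine le_of_tendsto ((hcost.min (hinf.mul_const (dS p.2 q.2))).const_mul C₆) ?_
  have hlowI : ∀ᶠ ε in 𝓝[>] 0, (p.1 : ℝ) - ε ∈ I :=
    (tendsto_nhds_of_tendsto_nhdsWithin hlow).eventually_mem (hI.mem_nhds p.1.2)
  have hhighI : ∀ᶠ ε in 𝓝[>] 0, (q.1 : ℝ) + ε ∈ I :=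
    (tendsto_nhds_of_tendsto_nhdsWithin hhigh).eventually_mem (hI.mem_nhds q.1.2)
  filter_upwards [hlowI, hhighI, self_mem_nhdsWithin] with ε hε_low hε_high (hε : 0 < ε)
  have hslab := hF6 (p.1 - ε) (q.1 + ε) hε_low.1 hε_high.2 (by linarith) p q
    (by linarith) (by linarith) (by linarith) (by linarith)
  have hcost_eq : min ((p.1 : ℝ) + q.1 - 2 * (p.1 - ε)) (2 * (q.1 + ε) - p.1 - q.1) =
      q.1 - p.1 + 2 * ε := by
    rw [min_eq_left (by linarith)]
    ring
  rwa [hcost_eq] at hslab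

/-- Property (F6), together with continuity of the warping function,
yields the lower bound `C₆·min{t_q − t_p, A_{[t_p,t_q]}·d_S(p_S,q_S)} ≤ d(p,q)`. -/
theorem F6_lower_bound {S : Type*} (dS : S → S → ℝ) (hdS : IsMetric dS)
    (a b : EReal) (hab : a < b)
    (f : ℝ → ℝ) (hf : ∀ t : ℝ, a < (t : EReal) → (t : EReal) < b → 0 < f t)
    (hfcont : ContinuousOn f {t : ℝ | a < (t : EReal) ∧ (t : EReal) < b})
    (d : GRWPoint a b S → GRWPoint a b S → ℝ) (hd : IsMetric d)
    (C₆ : ℝ) (hC₆ : 0 < C₆)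
    (hF6 : ∀ t₁ t₂ : ℝ, a ≤ (t₁ : EReal) → (t₂ : EReal) ≤ b → t₁ < t₂ →
      ∀ p q : GRWPoint a b S, t₁ < (p.1 : ℝ) → (p.1 : ℝ) < t₂ →
        t₁ < (q.1 : ℝ) → (q.1 : ℝ) < t₂ →
      (C₆ : EReal) * min (exitCost a b t₁ t₂ (p.1 : ℝ) (q.1 : ℝ))
          ((sInf (f '' Set.Ioo t₁ t₂) * dS p.2 q.2 : ℝ) : EReal) ≤ ((d p q : ℝ) : EReal)) :
    ∀ p q : GRWPoint a b S, (p.1 : ℝ) ≤ (q.1 : ℝ) →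
      C₆ * min ((q.1 : ℝ) - (p.1 : ℝ))
        (sInf (f '' Set.Icc (p.1 : ℝ) (q.1 : ℝ)) * dS p.2 q.2) ≤ d p q :=
  F6_lower_bound_general dS a b f hfcont.lowerSemicontinuousOn d C₆
    fun t₁ t₂ ht₁ ht₂ h p q hp hp' hq hq' ↦ (coe_mul_min_exitCost_le_iff ht₁ ht₂).1
      (hF6 t₁ t₂ ht₁.le ht₂.le h p q hp hp' hq hq')
end

section
/- Let d be a metric on M = I × S as in the GRW setup, with a ∈ ℝ finite, and suppose d satisfies (F4) with constant C₄. Suppose there is a sequence a_j → a⁺ in I along which f(a_j) → 0. Then: (i) for all p,q ∈ M, d(p,q) ≤ C₄·(t_p + t_q − 2a); (ii) every sequence p_k = (t_k, x_k) in M with t_k → a⁺ is a Cauchy sequence in (M,d), regardless of the spatial motion of (x_k); and (iii) for any two sequences p_k = (t_k, x_k) and q_k = (u_k, y_k) in M with t_k → a⁺ and u_k → a⁺, one has d(p_k, q_k) → 0, so the two sequences determine the same point of the metric completion of (M,d). -/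
open Filter Topology

/-- The underlying set `M = I × S` of a GRW spacetime with finite left endpoint `a ∈ ℝ`,
where `I = (a,b)` with `a < b ≤ ∞`. -/
abbrev GRWPointF (a : ℝ) (b : EReal) (S : Type*) : Type _ :=
  {t : ℝ // a < t ∧ (t : EReal) < b} × S

/-!
Letting `c → a⁺` along the pinching sequence in (F4) makes the spatial term vanish, because
`d_S(p_S, q_S)` does not depend on `c`, and leaves only the cost of descending from both points
to the time `a`. This cost tends to zero as both times tend to `a`; the Cauchy property is the
same convergence for the pairs `(p_j, p_k)` indexed by `ℕ × ℕ`.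
-/

section Pinching

variable {ι κ X S : Type*} {a C : ℝ} {l : Filter ι}

theorem le_mul_add_sub_two_mul_of_tendsto [l.NeBot] {s t x y : ℝ} {c w : ι → ℝ}
    (hs : a ≤ s) (ht : a ≤ t) (hc : Tendsto c l (𝓝 a)) (hw : Tendsto w l (𝓝 0))
    (hx : ∀ i, x ≤ C * (|s - c i| + w i * y + |t - c i|)) :
    x ≤ C * (s + t - 2 * a) := by
  have hlim : Tendsto (fun i => C * (|s - c i| + w i * y + |t - c i|)) l
      (𝓝 (C * (|s - a| + 0 * y + |t - a|))) :=
    (((hc.const_sub s).abs.add (hw.mul_const y)).add (hc.const_sub t).abs).const_mul C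
  calc
    x ≤ C * (|s - a| + 0 * y + |t - a|) := ge_of_tendsto' hlim hx
    _ = C * (s + t - 2 * a) := by
      rw [abs_of_nonneg (sub_nonneg.mpr hs), abs_of_nonneg (sub_nonneg.mpr ht)]
      ring

variable {d : X → X → ℝ} {τ : X → ℝ}

theorem tendsto_zero_of_le_mul_add_sub_two_mul (hd : ∀ x y, 0 ≤ d x y)
    (hle : ∀ x y, d x y ≤ C * (τ x + τ y - 2 * a)) {p q : ι → X}
    (hp : Tendsto (fun i => τ (p i)) l (𝓝 a)) (hq : Tendsto (fun i => τ (q i)) l (𝓝 a)) :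
    Tendsto (fun i => d (p i) (q i)) l (𝓝 0) := by
  have hbound : Tendsto (fun i => C * (τ (p i) + τ (q i) - 2 * a)) l (𝓝 0) := by
    simpa only [two_mul, sub_self, mul_zero] using
      ((hp.add hq).sub_const (2 * a)).const_mul C
  exact squeeze_zero (fun i => hd (p i) (q i)) (fun i => hle (p i) (q i)) hbound

theorem exists_forall_ge_lt_of_le_mul_add_sub_two_mul [Nonempty κ] [SemilatticeSup κ]
    (hd : ∀ x y, 0 ≤ d x y) (hle : ∀ x y, d x y ≤ C * (τ x + τ y - 2 * a)) {p : κ → X}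
    (hp : Tendsto (fun k => τ (p k)) atTop (𝓝 a)) {ε : ℝ} (hε : 0 < ε) :
    ∃ N, ∀ j k, N ≤ j → N ≤ k → d (p j) (p k) < ε := by
  have hpairs : Tendsto (fun jk : κ × κ => d (p jk.1) (p jk.2)) (atTop ×ˢ atTop) (𝓝 0) :=
    tendsto_zero_of_le_mul_add_sub_two_mul hd hle (hp.comp tendsto_fst) (hp.comp tendsto_snd)
  rw [prod_atTop_atTop_eq] at hpairs
  obtain ⟨N, hN⟩ := eventually_atTop_prod_self'.mp (hpairs.eventually_lt_const hε)
  exact ⟨N, fun j k hj hk => hN j hj k hk⟩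

theorem F4_spatial_pinching_general [l.NeBot] {I : Set ℝ} (ha : a ∈ lowerBounds I)
    {dS : S → S → ℝ} {f : ℝ → ℝ} {d : I × S → I × S → ℝ} (hd : ∀ p q, 0 ≤ d p q)
    (hF4 : ∀ p q : I × S, ∀ c ∈ I,
      d p q ≤ C * (|(p.1 : ℝ) - c| + f c * dS p.2 q.2 + |(q.1 : ℝ) - c|))
    {α : ι → ℝ} (hαI : ∀ i, α i ∈ I) (hαa : Tendsto α l (𝓝 a))
    (hfα : Tendsto (fun i => f (α i)) l (𝓝 0)) :
    (∀ p q : I × S, d p q ≤ C * ((p.1 : ℝ) + (q.1 : ℝ) - 2 * a)) ∧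
    (∀ p : ℕ → I × S, Tendsto (fun k => ((p k).1 : ℝ)) atTop (𝓝 a) →
      ∀ ε : ℝ, 0 < ε → ∃ N : ℕ, ∀ j k : ℕ, N ≤ j → N ≤ k → d (p j) (p k) < ε) ∧
    (∀ p q : ℕ → I × S, Tendsto (fun k => ((p k).1 : ℝ)) atTop (𝓝 a) →
      Tendsto (fun k => ((q k).1 : ℝ)) atTop (𝓝 a) →
      Tendsto (fun k => d (p k) (q k)) atTop (𝓝 0)) := by
  have hle (p q : I × S) : d p q ≤ C * ((p.1 : ℝ) + (q.1 : ℝ) - 2 * a) :=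
    le_mul_add_sub_two_mul_of_tendsto (ha p.1.2) (ha q.1.2) hαa hfα
      fun i => hF4 p q (α i) (hαI i)
  exact ⟨hle,
    fun _ hp _ hε =>
      exists_forall_ge_lt_of_le_mul_add_sub_two_mul (τ := fun p => p.1) hd hle hp hε,
    fun _ _ hp hq =>
      tendsto_zero_of_le_mul_add_sub_two_mul (τ := fun p => p.1) hd hle hp hq⟩

end Pinching

/-- (F4) and sequential spatial pinching `f(a_j) → 0` along `a_j → a⁺`
imply `d(p,q) ≤ C₄·(t_p + t_q − 2a)`, so sequences with times tending to `a⁺` are Cauchy,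
and any two such sequences are equivalent in the metric completion. -/
theorem F4_spatial_pinching {S : Type*} (dS : S → S → ℝ) (hdS : IsMetric dS)
    (a : ℝ) (b : EReal) (hab : (a : EReal) < b)
    (f : ℝ → ℝ) (hf : ∀ t : ℝ, a < t → (t : EReal) < b → 0 < f t)
    (d : GRWPointF a b S → GRWPointF a b S → ℝ) (hd : IsMetric d)
    (C₄ : ℝ) (hC₄ : 0 < C₄)
    (hF4 : ∀ p q : GRWPointF a b S, ∀ c : ℝ, a < c → (c : EReal) < b →
      d p q ≤ C₄ * (|(p.1 : ℝ) - c| + f c * dS p.2 q.2 + |(q.1 : ℝ) - c|))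
    (α : ℕ → ℝ) (hαmem : ∀ j, a < α j ∧ ((α j : ℝ) : EReal) < b)
    (hαa : Tendsto α atTop (𝓝 a))
    (hfα : Tendsto (fun j => f (α j)) atTop (𝓝 0)) :
    (∀ p q : GRWPointF a b S, d p q ≤ C₄ * ((p.1 : ℝ) + (q.1 : ℝ) - 2 * a)) ∧
    (∀ p : ℕ → GRWPointF a b S, Tendsto (fun k => ((p k).1 : ℝ)) atTop (𝓝 a) →
      ∀ ε : ℝ, 0 < ε → ∃ N : ℕ, ∀ j k : ℕ, N ≤ j → N ≤ k → d (p j) (p k) < ε) ∧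
    (∀ p q : ℕ → GRWPointF a b S, Tendsto (fun k => ((p k).1 : ℝ)) atTop (𝓝 a) →
      Tendsto (fun k => ((q k).1 : ℝ)) atTop (𝓝 a) →
      Tendsto (fun k => d (p k) (q k)) atTop (𝓝 0)) := by
  exact F4_spatial_pinching_general (I := {t | a < t ∧ (t : EReal) < b})
    (fun _ ht => ht.1.le) hd.1 (fun p q c hc => hF4 p q c hc.1 hc.2) hαmem hαa hfα
end

section
/- Let d be a metric on M = I × S as in the GRW setup, satisfying (F4) and (F5) with constants C₄ and C₅, and suppose 0 < f_inf and f_sup < ∞, where f_inf := inf{f(t) : t ∈ I} and f_sup := sup{f(t) : t ∈ I}. Let t₀ be a finite point of the closure of I in ℝ, and suppose f(t) → f₀ as t → t₀ within I, with f₀ = f_inf. Let p_k = (t_k, x_k) and q_k = (u_k, y_k) be Cauchy sequences in (M,d) with t_k → t₀ and u_k → t₀. Then the limits L_S := lim_{k→∞} d_S(x_k, y_k) and L := lim_{k→∞} d(p_k, q_k) exist, and C₅·f₀·L_S ≤ L ≤ C₄·f₀·L_S. -/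
open Filter Topology

/-!
By (F5) the projection to `S` is Lipschitz, so it preserves Cauchy sequences; since the distances
between two Cauchy sequences converge, both limits exist, and (F5) passes to the limit as the lower
bound. For the upper bound, (F4) is applied with the moving slice `c = t_k`: both time terms tend to
zero, while the warping factor `f t_k` tends to `f₀`.
-/

namespace IsMetric

variable {X : Type*} {d : X → X → ℝ}

/-- The pseudometric structure with distance function `d`, through which the theory of Cauchy
sequences applies to `d`. It is only ever a local instance, because `GRWPoint a b S` may also carry
the product distance. -/
abbrev toPseudoMetricSpace (hd : IsMetric d) : PseudoMetricSpace X where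
  dist := d
  dist_self := hd.2.1
  dist_comm := hd.2.2.2.1
  dist_triangle := hd.2.2.2.2

theorem cauchySeq_iff {ι : Type*} [Nonempty ι] [SemilatticeSup ι] (hd : IsMetric d) {u : ι → X} :
    letI := hd.toPseudoMetricSpace
    CauchySeq u ↔ ∀ ε : ℝ, 0 < ε → ∃ N : ι, ∀ j k : ι, N ≤ j → N ≤ k → d (u j) (u k) < ε := by
  let := hd.toPseudoMetricSpace
  rw [Metric.cauchySeq_iff]
  exact forall₂_congr fun _ _ => exists_congr fun _ => forall_congr' fun _ => forall_comm

end IsMetric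

section PseudoMetricSpace

variable {ι T S M : Type*} [PseudoMetricSpace T] [PseudoMetricSpace S] [PseudoMetricSpace M]

theorem exists_tendsto_dist_of_cauchySeq [Preorder ι] {u v : ι → M}
    (hu : CauchySeq u) (hv : CauchySeq v) :
    ∃ L : ℝ, Tendsto (fun k => dist (u k) (v k)) atTop (𝓝 L) :=
  cauchySeq_tendsto_of_complete (uniformContinuous_dist.comp_cauchySeq (hu.prodMk hv))

theorem uniformContinuous_of_mul_dist_le {π : M → S} {κ : ℝ} (hκ : 0 < κ)
    (hπ : ∀ p q, κ * dist (π p) (π q) ≤ dist p q) : UniformContinuous π :=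
  (LipschitzWith.of_dist_le' fun p q => (le_inv_mul_iff₀ hκ).2 (hπ p q)).uniformContinuous

theorem tendsto_moving_slice_bound {l : Filter ι} {I : Set T} {f : T → ℝ} {t₀ : T} {f₀ : ℝ}
    (hf : Tendsto f (𝓝[I] t₀) (𝓝 f₀)) {t u c : ι → T} (ht : Tendsto t l (𝓝 t₀))
    (hu : Tendsto u l (𝓝 t₀)) (hc : Tendsto c l (𝓝 t₀)) (hcI : ∀ k, c k ∈ I)
    {r : ι → ℝ} {R : ℝ} (hr : Tendsto r l (𝓝 R)) (C : ℝ) :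
    Tendsto (fun k => C * (dist (t k) (c k) + f (c k) * r k + dist (u k) (c k))) l
      (𝓝 (C * f₀ * R)) := by
  have hfc : Tendsto (fun k => f (c k)) l (𝓝 f₀) :=
    hf.comp (tendsto_nhdsWithin_iff.2 ⟨hc, Eventually.of_forall hcI⟩)
  simpa [mul_assoc] using (((ht.dist hc).add (hfc.mul hr)).add (hu.dist hc)).const_mul C

/-- A GRW spacetime enters only through its time function `τ : M → T` with values in `I` and its
spatial projection `π : M → S`; the constant `κ` stands for `C₅ * f_inf`. -/
theorem completed_slice_bounds_general [Preorder ι]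
    {I : Set T} {τ : M → T} {π : M → S} (hτ : ∀ p, τ p ∈ I) {f : T → ℝ} {C κ : ℝ} (hκ : 0 < κ)
    (hupper : ∀ p q, ∀ c ∈ I,
      dist p q ≤ C * (dist (τ p) c + f c * dist (π p) (π q) + dist (τ q) c))
    (hlower : ∀ p q, κ * dist (π p) (π q) ≤ dist p q)
    {t₀ : T} {f₀ : ℝ} (hf₀ : Tendsto f (𝓝[I] t₀) (𝓝 f₀))
    {p q : ι → M} (hp : CauchySeq p) (hq : CauchySeq q)
    (hpt : Tendsto (fun k => τ (p k)) atTop (𝓝 t₀))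
    (hqt : Tendsto (fun k => τ (q k)) atTop (𝓝 t₀)) :
    ∃ LS L : ℝ,
      Tendsto (fun k => dist (π (p k)) (π (q k))) atTop (𝓝 LS) ∧
      Tendsto (fun k => dist (p k) (q k)) atTop (𝓝 L) ∧
      κ * LS ≤ L ∧ L ≤ C * f₀ * LS := by
  have : (atTop : Filter ι).NeBot := hp.1.of_map
  have hπ : UniformContinuous π := uniformContinuous_of_mul_dist_le hκ hlower
  obtain ⟨LS, hLS⟩ :=
    exists_tendsto_dist_of_cauchySeq (hπ.comp_cauchySeq hp) (hπ.comp_cauchySeq hq)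
  obtain ⟨L, hL⟩ := exists_tendsto_dist_of_cauchySeq hp hq
  have hbound := tendsto_moving_slice_bound hf₀ hpt hqt hpt (fun k => hτ (p k)) hLS C
  exact ⟨LS, L, hLS, hL,
    le_of_tendsto_of_tendsto' (hLS.const_mul κ) hL fun k => hlower (p k) (q k),
    le_of_tendsto_of_tendsto' hL hbound fun k => hupper (p k) (q k) (τ (p k)) (hτ (p k))⟩

end PseudoMetricSpace

/-- Under (F4), (F5), bounded warping with minimal limit `f₀ = f_inf` at a
finite boundary time `t₀`, the completed distance between limits of Cauchy sequences with
times tending to `t₀` is pinched between `C₅·f₀` and `C₄·f₀` times the limit spatial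
distance. -/
theorem completed_slice_bounds {S : Type*} (dS : S → S → ℝ) (hdS : IsMetric dS)
    (a b : EReal) (hab : a < b)
    (f : ℝ → ℝ) (hf : ∀ t : ℝ, a < (t : EReal) → (t : EReal) < b → 0 < f t)
    (d : GRWPoint a b S → GRWPoint a b S → ℝ) (hd : IsMetric d)
    (C₄ C₅ : ℝ) (hC₄ : 0 < C₄) (hC₅ : 0 < C₅)
    (hF4 : ∀ p q : GRWPoint a b S, ∀ c : ℝ, a < (c : EReal) → (c : EReal) < b →
      d p q ≤ C₄ * (|(p.1 : ℝ) - c| + f c * dS p.2 q.2 + |(q.1 : ℝ) - c|))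
    (hF5 : ∀ p q : GRWPoint a b S,
      C₅ * sInf (f '' {t : ℝ | a < (t : EReal) ∧ (t : EReal) < b}) * dS p.2 q.2 ≤ d p q)
    (hinf : 0 < sInf (f '' {t : ℝ | a < (t : EReal) ∧ (t : EReal) < b}))
    (hsup : BddAbove (f '' {t : ℝ | a < (t : EReal) ∧ (t : EReal) < b}))
    (t₀ : ℝ) (ht₀ : t₀ ∈ closure {t : ℝ | a < (t : EReal) ∧ (t : EReal) < b})
    (f₀ : ℝ)
    (hf₀ : Tendsto f (𝓝[{t : ℝ | a < (t : EReal) ∧ (t : EReal) < b}] t₀) (𝓝 f₀))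
    (hf₀min : f₀ = sInf (f '' {t : ℝ | a < (t : EReal) ∧ (t : EReal) < b}))
    (p q : ℕ → GRWPoint a b S)
    (hpC : ∀ ε : ℝ, 0 < ε → ∃ N : ℕ, ∀ j k : ℕ, N ≤ j → N ≤ k → d (p j) (p k) < ε)
    (hqC : ∀ ε : ℝ, 0 < ε → ∃ N : ℕ, ∀ j k : ℕ, N ≤ j → N ≤ k → d (q j) (q k) < ε)
    (hpt : Tendsto (fun k => ((p k).1 : ℝ)) atTop (𝓝 t₀))
    (hqt : Tendsto (fun k => ((q k).1 : ℝ)) atTop (𝓝 t₀)) :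
    ∃ LS L : ℝ,
      Tendsto (fun k => dS (p k).2 (q k).2) atTop (𝓝 LS) ∧
      Tendsto (fun k => d (p k) (q k)) atTop (𝓝 L) ∧
      C₅ * f₀ * LS ≤ L ∧ L ≤ C₄ * f₀ * LS := by
  let := hdS.toPseudoMetricSpace
  let := hd.toPseudoMetricSpace
  exact completed_slice_bounds_general (τ := fun p => (p.1 : ℝ)) (π := Prod.snd) (fun p => p.1.2)
    (hf₀min ▸ mul_pos hC₅ hinf) (fun p q c hc => hF4 p q c hc.1 hc.2) (hf₀min ▸ hF5) hf₀
    (hd.cauchySeq_iff.2 hpC) (hd.cauchySeq_iff.2 hqC) hpt hqt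
end

section
/- Let d be a metric on M = (0,b) × S as in the past-finite GRW setup, with diam(S) > 0 (S contains two points at positive distance), and suppose d satisfies (F4) and (F6). For t ∈ (0,b] let M_t := (0,t) × S and let diam(M_t) denote its diameter with respect to d. Then the following are equivalent: (S1) there exists a sequence t_k → 0⁺ in (0,b) with f(t_k) → 0; (S2) diam(M_t) → 0 as t → 0⁺. -/
open Filter Topology ENNReal

/-- The underlying set `M = (0,b) × S` of a past-finite GRW spacetime, `0 < b ≤ ∞`. -/
abbrev GRWPoint0 (b : EReal) (S : Type*) : Type _ :=
  {t : ℝ // 0 < t ∧ (t : EReal) < b} × S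

/-!
If `f` clusters at `0` as `t → 0⁺`, letting `c → 0` along such times in (F4) removes the horizontal
term and leaves `d p q ≤ C₄ * (t_p + t_q)`, so the early universes shrink. Conversely, (F6) on the
slab `(0, δ) × S`, which can only be exited through its top, bounds the distance of two points over
`x` and `y` at a common time below `δ / 2` from below by `C₆ * min δ (A * dS x y)`, with `A` the
infimum of `f` on `(0, δ)`. As such points lie in every early universe, shrinking diameters force
`A = 0` for every `δ`.
-/

theorem mapClusterPt_iff_exists_seq_mem {α X : Type*} [TopologicalSpace X]
    [FirstCountableTopology X] {l : Filter α} [l.IsCountablyGenerated] {s : Set α} (hs : s ∈ l)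
    {x : X} {f : α → X} :
    MapClusterPt x l f ↔
      ∃ u : ℕ → α, (∀ n, u n ∈ s) ∧ Tendsto u atTop l ∧
        Tendsto (fun n => f (u n)) atTop (𝓝 x) := by
  constructor
  · intro h
    obtain ⟨u, hfu, hul⟩ := h.exists_seq_tendsto
    obtain ⟨N, hN⟩ := eventually_atTop.1 (hul.eventually hs)
    exact ⟨fun n => u (n + N), fun n => hN _ (Nat.le_add_left N n),
      hul.comp (tendsto_add_atTop_nat N), hfu.comp (tendsto_add_atTop_nat N)⟩
  · rintro ⟨u, -, hul, hfu⟩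
    exact hfu.mapClusterPt.of_comp hul

theorem eventually_nhdsGT_zero_coe_lt {b : EReal} (hb : 0 < b) :
    ∀ᶠ t : ℝ in 𝓝[>] 0, 0 < t ∧ (t : EReal) < b :=
  eventually_mem_nhdsWithin.and <| eventually_nhdsWithin_of_eventually_nhds <|
    (continuous_coe_real_ereal.tendsto 0).eventually_lt_const hb

theorem exists_seq_pos_lt_iff_mapClusterPt {X : Type*} [TopologicalSpace X]
    [FirstCountableTopology X] {b : EReal} (hb : 0 < b) {f : ℝ → X} {x : X} :
    (∃ u : ℕ → ℝ, (∀ k, 0 < u k ∧ (u k : EReal) < b) ∧ Tendsto u atTop (𝓝 0) ∧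
        Tendsto (fun k => f (u k)) atTop (𝓝 x)) ↔ MapClusterPt x (𝓝[>] 0) f := by
  rw [mapClusterPt_iff_exists_seq_mem (eventually_nhdsGT_zero_coe_lt hb)]
  refine exists_congr fun u => and_congr_right fun hu => and_congr_left fun _ => ?_
  exact ⟨fun h => tendsto_nhdsWithin_iff.2 ⟨h, .of_forall fun k => (hu k).1⟩,
    fun h => h.mono_right nhdsWithin_le_nhds⟩

theorem mapClusterPt_zero_of_sInf_image_Ioo_nonpos {f : ℝ → ℝ} (hf : ∀ᶠ t in 𝓝[>] 0, 0 ≤ f t)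
    (hinf : ∀ᶠ δ in 𝓝[>] 0, sInf (f '' Set.Ioo 0 δ) ≤ 0) : MapClusterPt 0 (𝓝[>] 0) f := by
  rw [Metric.nhds_basis_ball.mapClusterPt_iff_frequently]
  intro ε hε
  suffices hsmall : ∃ᶠ t in 𝓝[>] 0, f t < ε from
    (hsmall.and_eventually hf).mono fun t ht => by
      simpa [Real.dist_eq, abs_of_nonneg ht.2] using ht.1
  rw [(nhdsGT_basis (0 : ℝ)).frequently_iff]
  intro η hη
  obtain ⟨δ, hδ, hδ0, hδη⟩ := (hinf.and (Ioo_mem_nhdsGT hη)).exists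
  obtain ⟨_, ⟨t, ht, rfl⟩, htε⟩ :=
    exists_lt_of_csInf_lt ((Set.nonempty_Ioo.2 hδ0).image f) (hδ.trans_lt hε)
  exact ⟨t, ⟨ht.1, ht.2.trans hδη⟩, htε⟩

theorem exitCost_of_not_lt_of_lt {a b : EReal} {t₁ t₂ : ℝ} (h₁ : ¬ a < (t₁ : EReal))
    (h₂ : (t₂ : EReal) < b) (tp tq : ℝ) :
    exitCost a b t₁ t₂ tp tq = ((2 * t₂ - tp - tq : ℝ) : EReal) := by
  rw [exitCost, if_neg h₁, if_pos h₂]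

section GRW

variable {S : Type*} {b : EReal}

/-- Property (F4) with constant `C`: the distance is bounded by the cost of travelling vertically
to the slice `t = c`, horizontally inside it, and vertically to the endpoint. -/
def DetourBound (dS : S → S → ℝ) (f : ℝ → ℝ) (d : GRWPoint0 b S → GRWPoint0 b S → ℝ) (C : ℝ) :
    Prop :=
  ∀ p q : GRWPoint0 b S, ∀ c : ℝ, 0 < c → (c : EReal) < b →
    d p q ≤ C * (|(p.1 : ℝ) - c| + f c * dS p.2 q.2 + |(q.1 : ℝ) - c|)

/-- Property (F6) with constant `C`: points of a slab `(t₁, t₂) × S` are at least as far apart as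
the cheaper of leaving the slab and crossing it horizontally. An upper end `t₂ = ∞` is not
represented, since `t₂` is real. -/
def SlabBound (dS : S → S → ℝ) (f : ℝ → ℝ) (d : GRWPoint0 b S → GRWPoint0 b S → ℝ) (C : ℝ) :
    Prop :=
  ∀ t₁ t₂ : ℝ, 0 ≤ t₁ → (t₂ : EReal) ≤ b → t₁ < t₂ →
    ∀ p q : GRWPoint0 b S, t₁ < (p.1 : ℝ) → (p.1 : ℝ) < t₂ →
      t₁ < (q.1 : ℝ) → (q.1 : ℝ) < t₂ →
    (C : EReal) * min (exitCost (0 : EReal) b t₁ t₂ (p.1 : ℝ) (q.1 : ℝ))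
        ((sInf (f '' Set.Ioo t₁ t₂) * dS p.2 q.2 : ℝ) : EReal) ≤ ((d p q : ℝ) : EReal)

/-- The diameter of the early universe `M_t = (0, t) × S` with respect to `d`, as an extended
nonnegative real. Negative values of `d` count as `0`. -/
noncomputable def diamBelow (d : GRWPoint0 b S → GRWPoint0 b S → ℝ) (t : ℝ) : ℝ≥0∞ :=
  ⨆ (p : GRWPoint0 b S) (q : GRWPoint0 b S) (_ : (p.1 : ℝ) < t) (_ : (q.1 : ℝ) < t),
    ENNReal.ofReal (d p q)

variable {dS : S → S → ℝ} {f : ℝ → ℝ} {d : GRWPoint0 b S → GRWPoint0 b S → ℝ} {C : ℝ}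

theorem ofReal_le_diamBelow {t : ℝ} {p q : GRWPoint0 b S} (hp : (p.1 : ℝ) < t)
    (hq : (q.1 : ℝ) < t) : ENNReal.ofReal (d p q) ≤ diamBelow d t :=
  le_iSup_of_le p <| le_iSup_of_le q <| le_iSup_of_le hp <| le_iSup_of_le hq le_rfl

theorem diamBelow_le_ofReal {t r : ℝ}
    (h : ∀ p q : GRWPoint0 b S, (p.1 : ℝ) < t → (q.1 : ℝ) < t → d p q ≤ r) :
    diamBelow d t ≤ ENNReal.ofReal r :=
  iSup_le fun p => iSup_le fun q => iSup_le fun hp => iSup_le fun hq =>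
    ENNReal.ofReal_le_ofReal (h p q hp hq)

theorem DetourBound.le_mul_add_of_mapClusterPt (h : DetourBound dS f d C)
    (hf : MapClusterPt 0 (𝓝[>] 0) f) (p q : GRWPoint0 b S) :
    d p q ≤ C * ((p.1 : ℝ) + q.1) := by
  have hb : 0 < b := lt_trans (by exact_mod_cast p.1.2.1) p.1.2.2
  obtain ⟨u, hu, hu0, hfu⟩ := (exists_seq_pos_lt_iff_mapClusterPt hb).2 hf
  have hcost : Tendsto
      (fun k => C * (|(p.1 : ℝ) - u k| + f (u k) * dS p.2 q.2 + |(q.1 : ℝ) - u k|)) atTop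
      (𝓝 (C * (|(p.1 : ℝ) - 0| + 0 * dS p.2 q.2 + |(q.1 : ℝ) - 0|))) :=
    (((hu0.const_sub _).abs.add (hfu.mul_const _)).add (hu0.const_sub _).abs).const_mul C
  simpa [abs_of_pos p.1.2.1, abs_of_pos q.1.2.1] using
    ge_of_tendsto' hcost fun k => h p q (u k) (hu k).1 (hu k).2

theorem tendsto_diamBelow_of_le_mul_add (hC : 0 ≤ C)
    (h : ∀ p q : GRWPoint0 b S, d p q ≤ C * ((p.1 : ℝ) + q.1)) :
    Tendsto (diamBelow d) (𝓝[>] 0) (𝓝 0) := by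
  have hdiam (t : ℝ) : diamBelow d t ≤ ENNReal.ofReal (C * (t + t)) :=
    diamBelow_le_ofReal fun p q hp hq => (h p q).trans (by gcongr)
  have hlim : Tendsto (fun t : ℝ => ENNReal.ofReal (C * (t + t))) (𝓝 0) (𝓝 0) :=
    (ENNReal.continuous_ofReal.comp (by fun_prop : Continuous fun t : ℝ => C * (t + t))).tendsto'
      0 0 (by simp)
  exact tendsto_of_tendsto_of_tendsto_of_le_of_le tendsto_const_nhds
    (hlim.mono_left nhdsWithin_le_nhds) (fun _ => zero_le) hdiam

theorem SlabBound.mul_min_le (h : SlabBound dS f d C) {δ : ℝ} (hδ : (δ : EReal) < b)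
    {p q : GRWPoint0 b S} (hp : (p.1 : ℝ) < δ) (hq : (q.1 : ℝ) < δ) :
    C * min (2 * δ - p.1 - q.1) (sInf (f '' Set.Ioo 0 δ) * dS p.2 q.2) ≤ d p q := by
  have hslab := h 0 δ le_rfl hδ.le (p.1.2.1.trans hp) p q p.1.2.1 hp q.1.2.1 hq
  rwa [exitCost_of_not_lt_of_lt (by simp) hδ, ← EReal.coe_strictMono.monotone.map_min,
    ← EReal.coe_mul, EReal.coe_le_coe_iff] at hslab

theorem SlabBound.ofReal_mul_min_le_diamBelow (h : SlabBound dS f d C) (hC : 0 ≤ C) {δ : ℝ}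
    (hδ0 : 0 < δ) (hδb : (δ : EReal) < b) (x y : S) {t : ℝ} (ht : 0 < t) :
    ENNReal.ofReal (C * min δ (sInf (f '' Set.Ioo 0 δ) * dS x y)) ≤ diamBelow d t := by
  obtain ⟨s, hs0, hs⟩ := exists_between (lt_min ht (half_pos hδ0))
  obtain ⟨hst, hsδ2⟩ := lt_min_iff.1 hs
  have hsδ : s < δ := hsδ2.trans (half_lt_self hδ0)
  let s' : {t : ℝ // 0 < t ∧ (t : EReal) < b} :=
    ⟨s, hs0, (EReal.coe_lt_coe_iff.2 hsδ).trans hδb⟩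
  have hexit : δ ≤ 2 * δ - s - s := by linarith
  calc ENNReal.ofReal (C * min δ (sInf (f '' Set.Ioo 0 δ) * dS x y))
      ≤ ENNReal.ofReal (C * min (2 * δ - s - s) (sInf (f '' Set.Ioo 0 δ) * dS x y)) := by gcongr
    _ ≤ ENNReal.ofReal (d (s', x) (s', y)) :=
      ENNReal.ofReal_le_ofReal (h.mul_min_le (p := (s', x)) (q := (s', y)) hδb hsδ hsδ)
    _ ≤ diamBelow d t := ofReal_le_diamBelow (p := (s', x)) (q := (s', y)) hst hst

theorem SlabBound.sInf_image_Ioo_nonpos (h : SlabBound dS f d C) (hC : 0 < C)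
    (hS : ∃ x y : S, 0 < dS x y) (hdiam : Tendsto (diamBelow d) (𝓝[>] 0) (𝓝 0)) {δ : ℝ}
    (hδ0 : 0 < δ) (hδb : (δ : EReal) < b) : sInf (f '' Set.Ioo 0 δ) ≤ 0 := by
  obtain ⟨x, y, hxy⟩ := hS
  have hzero : ENNReal.ofReal (C * min δ (sInf (f '' Set.Ioo 0 δ) * dS x y)) ≤ 0 :=
    ge_of_tendsto hdiam <| eventually_nhdsWithin_of_forall fun _ ht =>
      h.ofReal_mul_min_le_diamBelow hC.le hδ0 hδb x y ht
  contrapose! hzero with hinf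
  exact ENNReal.ofReal_pos.2 (mul_pos hC (lt_min hδ0 (mul_pos hinf hxy)))

theorem sequential_pinching_iff_diam_general (hSpos : ∃ x y : S, 0 < dS x y) (hb : 0 < b)
    (hf : ∀ t : ℝ, 0 < t → (t : EReal) < b → 0 < f t) {C₄ C₆ : ℝ} (hC₄ : 0 < C₄) (hC₆ : 0 < C₆)
    (hF4 : DetourBound dS f d C₄) (hF6 : SlabBound dS f d C₆) :
    (∃ tseq : ℕ → ℝ, (∀ k, 0 < tseq k ∧ ((tseq k : ℝ) : EReal) < b) ∧
        Tendsto tseq atTop (𝓝 0) ∧ Tendsto (fun k => f (tseq k)) atTop (𝓝 0)) ↔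
      Tendsto (diamBelow d) (𝓝[>] 0) (𝓝 0) := by
  rw [exists_seq_pos_lt_iff_mapClusterPt hb]
  have hnear := eventually_nhdsGT_zero_coe_lt hb
  exact ⟨fun hcluster => tendsto_diamBelow_of_le_mul_add hC₄.le
      (hF4.le_mul_add_of_mapClusterPt hcluster),
    fun hdiam => mapClusterPt_zero_of_sInf_image_Ioo_nonpos
      (hnear.mono fun t ht => (hf t ht.1 ht.2).le)
      (hnear.mono fun _ hδ => hF6.sInf_image_Ioo_nonpos hC₆ hSpos hdiam hδ.1 hδ.2)⟩

end GRW

/-- For a GRW-faithful distance (satisfying (F4) and (F6)) on a past-finite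
GRW spacetime with `diam S > 0`, sequential pinching `f(t_k) → 0` along some `t_k → 0⁺`
is equivalent to the diameters of the early universes `M_t = (0,t) × S` shrinking to zero. -/
theorem sequential_pinching_iff_diam {S : Type*} (dS : S → S → ℝ) (hdS : IsMetric dS)
    (hSpos : ∃ x y : S, 0 < dS x y)
    (b : EReal) (hb : (0 : EReal) < b)
    (f : ℝ → ℝ) (hf : ∀ t : ℝ, 0 < t → (t : EReal) < b → 0 < f t)
    (d : GRWPoint0 b S → GRWPoint0 b S → ℝ) (hd : IsMetric d)
    (C₄ C₆ : ℝ) (hC₄ : 0 < C₄) (hC₆ : 0 < C₆)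
    (hF4 : ∀ p q : GRWPoint0 b S, ∀ c : ℝ, 0 < c → (c : EReal) < b →
      d p q ≤ C₄ * (|(p.1 : ℝ) - c| + f c * dS p.2 q.2 + |(q.1 : ℝ) - c|))
    (hF6 : ∀ t₁ t₂ : ℝ, 0 ≤ t₁ → (t₂ : EReal) ≤ b → t₁ < t₂ →
      ∀ p q : GRWPoint0 b S, t₁ < (p.1 : ℝ) → (p.1 : ℝ) < t₂ →
        t₁ < (q.1 : ℝ) → (q.1 : ℝ) < t₂ →
      (C₆ : EReal) * min (exitCost (0 : EReal) b t₁ t₂ (p.1 : ℝ) (q.1 : ℝ))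
          ((sInf (f '' Set.Ioo t₁ t₂) * dS p.2 q.2 : ℝ) : EReal) ≤ ((d p q : ℝ) : EReal)) :
    (∃ tseq : ℕ → ℝ, (∀ k, 0 < tseq k ∧ ((tseq k : ℝ) : EReal) < b) ∧
        Tendsto tseq atTop (𝓝 0) ∧ Tendsto (fun k => f (tseq k)) atTop (𝓝 0)) ↔
    Tendsto (fun t : ℝ => ⨆ (p : GRWPoint0 b S) (q : GRWPoint0 b S)
        (_ : (p.1 : ℝ) < t) (_ : (q.1 : ℝ) < t), ENNReal.ofReal (d p q))
      (𝓝[>] (0 : ℝ)) (𝓝 0) :=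
  sequential_pinching_iff_diam_general hSpos hb hf hC₄ hC₆ hF4 hF6
end

section
/- Let d be a metric on M = (0,b) × S as in the past-finite GRW setup, with S nonempty, and suppose d satisfies (F4) with constant C₄. Let (M̄, d̄) denote the metric completion of (M,d), with M identified with its dense image, and suppose the time function τ(t,x) = t admits a continuous extension τ̄ : M̄ → ℝ. For t ∈ (0,b] let M_t := (0,t) × S and let diam(M_t) denote its diameter with respect to d. Then diam(M_t) → 0 as t → 0⁺ if and only if the fiber τ̄⁻¹(0) ⊆ M̄ consists of exactly one point. -/
open Filter Topology ENNReal

/-! By (F4) with `c = t_q`, each vertical curve `t ↦ (t, x)` is `C₄`-Lipschitz, so in the complete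
space `M̄` it has an endpoint as `t → 0⁺`. The endpoint lies in `τ̄⁻¹(0)`, at distance at most
`C₄ t` from `(t, x)`. If the fiber is a single point, all curves share their endpoint, so `M_t` lies
in a ball of radius `C₄ t`. Conversely, by density `M_t` has the diameter of the open set
`τ̄⁻¹(-∞, t)`, which contains the fiber. -/

open scoped NNReal

section EDiam

variable {X Y : Type*}

theorem ediam_image_preimage_of_denseRange [PseudoEMetricSpace Y] {ι : X → Y} (hι : DenseRange ι)
    {U : Set Y} (hU : IsOpen U) : Metric.ediam (ι '' (ι ⁻¹' U)) = Metric.ediam U := by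
  refine le_antisymm (Metric.ediam_mono (Set.image_preimage_subset ι U)) ?_
  rw [← Metric.ediam_closure (ι '' (ι ⁻¹' U)), Set.image_preimage_eq_inter_range]
  exact Metric.ediam_mono (hι.open_subset_closure_inter hU)

theorem iSup_edist_eq_ediam_image [PseudoEMetricSpace Y] (ι : X → Y) (P : X → Prop) :
    ⨆ (p : X) (q : X) (_ : P p) (_ : P q), edist (ι p) (ι q) = Metric.ediam (ι '' {p | P p}) := by
  simp only [Metric.ediam, iSup_image, Set.mem_ofPred_eq]
  exact iSup_congr fun p ↦ iSup_comm

theorem subsingleton_fiber_of_tendsto_ediam [EMetricSpace Y] {R : Type*} [TopologicalSpace R]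
    [Preorder R] {a : R} [(𝓝[>] a).NeBot] {τ : Y → R}
    (h : Tendsto (fun t ↦ Metric.ediam (τ ⁻¹' Set.Iio t)) (𝓝[>] a) (𝓝 0)) :
    (τ ⁻¹' {a}).Subsingleton := by
  rw [← Metric.ediam_eq_zero_iff, ← nonpos_iff_eq_zero]
  refine ge_of_tendsto h (eventually_mem_nhdsWithin.mono fun t ht ↦ Metric.ediam_mono ?_)
  exact Set.preimage_mono (Set.singleton_subset_iff.2 ht)

theorem tendsto_ediam_image_of_edist_le [PseudoEMetricSpace Y] {ι : X → Y} {τ : X → ℝ} {K : ℝ≥0}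
    {y : Y} (h : ∀ p, edist (ι p) y ≤ K * ENNReal.ofReal (τ p)) :
    Tendsto (fun t ↦ Metric.ediam (ι '' {p | τ p < t})) (𝓝 0) (𝓝 0) := by
  have hball (t : ℝ) : ι '' {p | τ p < t} ⊆ Metric.closedEBall y (K * ENNReal.ofReal t) := by
    rintro _ ⟨p, hp, rfl⟩
    exact (h p).trans (by gcongr; exact hp.le)
  have hbound : Continuous fun t : ℝ ↦ 2 * (K * ENNReal.ofReal t) :=
    (ENNReal.continuous_const_mul ENNReal.ofNat_ne_top).comp <|
      (ENNReal.continuous_const_mul ENNReal.coe_ne_top).comp ENNReal.continuous_ofReal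
  exact tendsto_of_tendsto_of_tendsto_of_le_of_le tendsto_const_nhds
    (hbound.tendsto' 0 0 (by simp)) (fun _ ↦ zero_le)
    fun t ↦ (Metric.ediam_mono (hball t)).trans Metric.ediam_closedEBall_le

end EDiam

theorem exists_endpoint_of_lipschitzWith {X Y : Type*} [EMetricSpace X]
    [PseudoEMetricSpace Y] [CompleteSpace Y] {T : Set X} {a : X} (ha : a ∈ closure T) {K : ℝ≥0}
    {γ : T → Y} (hγ : LipschitzWith K γ) {τ : Y → X} (hτ : Continuous τ)
    (hτγ : ∀ t, τ (γ t) = t) : ∃ y, τ y = a ∧ ∀ t : T, edist (γ t) y ≤ K * edist (t : X) a := by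
  let l : Filter T := comap (↑) (𝓝 a)
  have : l.NeBot := mem_closure_iff_comap_neBot.1 ha
  have hl : Tendsto ((↑) : T → X) l (𝓝 a) := tendsto_comap
  have hcauchy : Cauchy l := cauchy_nhds.comap' uniformity_subtype.ge this
  obtain ⟨y, hy⟩ : ∃ y, Tendsto γ l (𝓝 y) :=
    cauchy_map_iff_exists_tendsto.1 (hcauchy.map hγ.uniformContinuous)
  refine ⟨y, tendsto_nhds_unique ((hτ.tendsto y).comp hy) (hl.congr fun t ↦ (hτγ t).symm),
    fun t ↦ ?_⟩
  have hleft : Tendsto (fun s ↦ edist (γ t) (γ s)) l (𝓝 (edist (γ t) y)) :=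
    tendsto_const_nhds.edist hy
  have hright : Tendsto (fun s : T ↦ (K : ℝ≥0∞) * edist (t : X) s) l (𝓝 (K * edist (t : X) a)) :=
    ENNReal.Tendsto.const_mul (tendsto_const_nhds.edist hl) (.inr ENNReal.coe_ne_top)
  exact le_of_tendsto_of_tendsto' hleft hright fun s ↦ hγ t s

theorem mem_closure_setOf_lt_and_coe_lt {a : ℝ} {b : EReal} (hab : a < b) :
    a ∈ closure {t : ℝ | a < t ∧ (t : EReal) < b} := by
  have hlt : ∀ᶠ t : ℝ in 𝓝[>] a, (t : EReal) < b :=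
    ((continuous_coe_real_ereal.tendsto a).eventually_lt_const hab).filter_mono nhdsWithin_le_nhds
  exact mem_closure_of_tendsto (f := id) (b := 𝓝[>] a) nhdsWithin_le_nhds
    (eventually_mem_nhdsWithin.and hlt)

theorem vertical_dist_le_of_faithful {S : Type*} {dS : S → S → ℝ} (hdS : ∀ x, dS x x = 0)
    {b : EReal} {f : ℝ → ℝ} {d : GRWPoint0 b S → GRWPoint0 b S → ℝ} {C : ℝ}
    (hF4 : ∀ p q : GRWPoint0 b S, ∀ c : ℝ, 0 < c → (c : EReal) < b →
      d p q ≤ C * (|(p.1 : ℝ) - c| + f c * dS p.2 q.2 + |(q.1 : ℝ) - c|))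
    (x : S) (s t : {t : ℝ // 0 < t ∧ (t : EReal) < b}) :
    d (s, x) (t, x) ≤ C * |(s : ℝ) - t| := by
  simpa [hdS] using hF4 (s, x) (t, x) t t.2.1 t.2.2

theorem diam_shrinks_iff_single_bang_general {S : Type*} [Nonempty S] {T : Set ℝ}
    (hT : ∀ t ∈ T, 0 ≤ t) (hT₀ : 0 ∈ closure T) {d : T × S → T × S → ℝ} {C : ℝ}
    (hvert : ∀ x s t, d (s, x) (t, x) ≤ C * |(s : ℝ) - t|)
    {Mbar : Type*} [MetricSpace Mbar] [CompleteSpace Mbar] (ι : T × S → Mbar)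
    (hdense : DenseRange ι) (hiso : ∀ p q, dist (ι p) (ι q) = d p q)
    {τbar : Mbar → ℝ} (hτcont : Continuous τbar) (hτext : ∀ p, τbar (ι p) = p.1) :
    Tendsto (fun t : ℝ ↦ ⨆ (p : T × S) (q : T × S)
        (_ : (p.1 : ℝ) < t) (_ : (q.1 : ℝ) < t), ENNReal.ofReal (d p q))
      (𝓝[>] (0 : ℝ)) (𝓝 0) ↔
    ∃ x : Mbar, τbar ⁻¹' {0} = {x} := by
  have hlip (x : S) : LipschitzWith C.toNNReal fun t ↦ ι (t, x) :=
    .of_dist_le' fun s t ↦ (hiso _ _).trans_le (hvert x s t)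
  have hendpoint (x : S) := exists_endpoint_of_lipschitzWith hT₀ (hlip x) hτcont
    fun t ↦ hτext (t, x)
  simp only [← hiso, ← edist_dist, iSup_edist_eq_ediam_image ι fun p ↦ (p.1 : ℝ) < _]
  constructor
  · intro h
    obtain ⟨y, hy, -⟩ := hendpoint (Classical.arbitrary S)
    have hpre (t : ℝ) : {p : T × S | (p.1 : ℝ) < t} = ι ⁻¹' (τbar ⁻¹' Set.Iio t) := by
      ext p; simp [hτext]
    simp only [hpre, ediam_image_preimage_of_denseRange hdense (isOpen_Iio.preimage hτcont)] at h
    exact ⟨y, (subsingleton_fiber_of_tendsto_ediam h).eq_singleton_of_mem hy⟩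
  · rintro ⟨y, hy⟩
    have hnear (p : T × S) : edist (ι p) y ≤ C.toNNReal * ENNReal.ofReal p.1 := by
      obtain ⟨z, hz, hpz⟩ := hendpoint p.2
      obtain rfl : z = y := hy.subset hz
      simpa [edist_dist, abs_of_nonneg (hT p.1 p.1.2)] using hpz p.1
    exact (tendsto_ediam_image_of_edist_le hnear).mono_left nhdsWithin_le_nhds

/-- For a GRW-faithful distance (satisfying (F4)) on a past-finite GRW
spacetime, the diameters of the early universes `M_t` shrink to zero as `t → 0⁺` iff the
fiber `τ̄⁻¹(0)` in the metric completion is a single (big bang) point. -/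
theorem diam_shrinks_iff_single_bang {S : Type*} [Nonempty S]
    (dS : S → S → ℝ) (hdS : IsMetric dS)
    (b : EReal) (hb : (0 : EReal) < b)
    (f : ℝ → ℝ) (hf : ∀ t : ℝ, 0 < t → (t : EReal) < b → 0 < f t)
    (d : GRWPoint0 b S → GRWPoint0 b S → ℝ) (hd : IsMetric d)
    (C₄ : ℝ) (hC₄ : 0 < C₄)
    (hF4 : ∀ p q : GRWPoint0 b S, ∀ c : ℝ, 0 < c → (c : EReal) < b →
      d p q ≤ C₄ * (|(p.1 : ℝ) - c| + f c * dS p.2 q.2 + |(q.1 : ℝ) - c|))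
    {Mbar : Type*} [MetricSpace Mbar] [CompleteSpace Mbar]
    (ι : GRWPoint0 b S → Mbar) (hdense : DenseRange ι)
    (hiso : ∀ p q : GRWPoint0 b S, dist (ι p) (ι q) = d p q)
    (τbar : Mbar → ℝ) (hτcont : Continuous τbar)
    (hτext : ∀ p : GRWPoint0 b S, τbar (ι p) = (p.1 : ℝ)) :
    Tendsto (fun t : ℝ => ⨆ (p : GRWPoint0 b S) (q : GRWPoint0 b S)
        (_ : (p.1 : ℝ) < t) (_ : (q.1 : ℝ) < t), ENNReal.ofReal (d p q))
      (𝓝[>] (0 : ℝ)) (𝓝 0) ↔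
    ∃ x : Mbar, τbar ⁻¹' {0} = {x} :=
  diam_shrinks_iff_single_bang_general (fun _ ht ↦ ht.1.le) (mem_closure_setOf_lt_and_coe_lt hb)
    (vertical_dist_le_of_faithful hdS.2.1 hF4) ι hdense hiso hτcont hτext
end

section
/- Let 0 < b ≤ ∞, let (S,d_S) be a metric space with 0 < diam(S) < ∞, and let f : (0,b) → (0,∞) be a continuous positive function. For 0 ≤ u < v ≤ b let M_{(u,v)} := (u,v) × S, and suppose for each such pair (u,v) we are given a metric d_{(u,v)} on M_{(u,v)} satisfying the GRW faithfulness conditions (F4) and (F6) on M_{(u,v)} (with warping function f restricted to (u,v) and with interval endpoints a = u, b = v) with constants C₄, C₆ > 0 independent of u and v; let diam_int(M_{(u,v)}) denote the diameter of M_{(u,v)} with respect to d_{(u,v)}. Then the following are equivalent: (U1) f(t) → 0 as t → 0⁺; (U2) sup{diam_int(M_{(u,v)}) : 0 ≤ u < v ≤ t} → 0 as t → 0⁺. -/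
open Filter Topology ENNReal

/-!
Testing (F4) at any intermediate level `c` of a slab below time `t` bounds its diameter by
`C₄ (2 t + f(c) diam S)`, which is small if `f` is small near `0`.

Conversely, a point `s > 0` has slabs `(u, v) × S` around it, below time `2 s`, on which `f` stays
above any given `m < f s`. Inside such a slab the exit cost in (F6) is infinite, since there is
nothing to exit into, so two points over `x, y ∈ S` are at distance at least `C₆ m d_S(x, y)`.
Letting `m → f s` bounds `f s` by a multiple of the supremum of the diameters below time `2 s`.
-/

open Set

/-- The diameter of the slab `(u, v) × S` with respect to `d`, as an extended nonnegative real.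
Only the values of `d` on the slab enter, so `d` may be arbitrary elsewhere. -/
noncomputable def slabDiam {S : Type*} (d : ℝ × S → ℝ × S → ℝ) (u v : ℝ) : ℝ≥0∞ :=
  ⨆ (p : ℝ × S) (q : ℝ × S) (_ : u < p.1) (_ : p.1 < v) (_ : u < q.1) (_ : q.1 < v),
    ENNReal.ofReal (d p q)

/-- The supremum of the diameters of all slabs `(u, v) × S` with `0 ≤ u < v ≤ t`, each measured
in its own distance function `D u v`. -/
noncomputable def supSlabDiam {S : Type*} (D : ℝ → ℝ → ℝ × S → ℝ × S → ℝ) (t : ℝ) : ℝ≥0∞ :=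
  ⨆ (u : ℝ) (v : ℝ) (_ : 0 ≤ u) (_ : u < v) (_ : v ≤ t), slabDiam (D u v) u v

/-- Condition (F4) on the slab `(u, v) × S`: up to the factor `C`, the distance from `p` to `q` is
at most the cost of moving vertically from `p` to a level `c`, horizontally inside that level, and
vertically to `q`. -/
def SlabUpperBound {S : Type*} (dS : S → S → ℝ) (f : ℝ → ℝ) (C : ℝ)
    (d : ℝ × S → ℝ × S → ℝ) (u v : ℝ) : Prop :=
  ∀ p q : ℝ × S, u < p.1 → p.1 < v → u < q.1 → q.1 < v → ∀ c : ℝ, u < c → c < v →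
    d p q ≤ C * (|p.1 - c| + f c * dS p.2 q.2 + |q.1 - c|)

/-- The instance of condition (F6) on the slab `(u, v) × S` in which the subinterval is the whole
of `(u, v)`. The exit cost is then infinite, and only the horizontal term of the minimum is left. -/
def SlabLowerBound {S : Type*} (dS : S → S → ℝ) (f : ℝ → ℝ) (C : ℝ)
    (d : ℝ × S → ℝ × S → ℝ) (u v : ℝ) : Prop :=
  ∀ p q : ℝ × S, u < p.1 → p.1 < v → u < q.1 → q.1 < v →
    C * (sInf (f '' Ioo u v) * dS p.2 q.2) ≤ d p q

theorem exitCost_self (u v tp tq : ℝ) : exitCost u v u v tp tq = ⊤ := by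
  simp [exitCost]

theorem eventually_coe_lt_nhdsGT_zero {b : EReal} (hb : 0 < b) :
    ∀ᶠ t : ℝ in 𝓝[>] 0, (t : EReal) < b :=
  continuous_coe_real_ereal.continuousWithinAt.tendsto.eventually_lt_const hb

theorem exists_Ioo_le_sInf_image {α β : Type*} [LinearOrder α] [DenselyOrdered α]
    [TopologicalSpace α] [OrderTopology α] [ConditionallyCompleteLinearOrder β]
    {f : α → β} {s a t : α} {m : β} (hf : LowerSemicontinuousAt f s) (hs : s ∈ Ioo a t)
    (hm : m < f s) :
    ∃ u v, a ≤ u ∧ s ∈ Ioo u v ∧ v ≤ t ∧ m ≤ sInf (f '' Ioo u v) := by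
  have hnear : ∀ᶠ z in 𝓝 s, z ∈ Ioo a t ∧ m < f z :=
    (isOpen_Ioo.eventually_mem hs).and (hf m hm)
  obtain ⟨u, v, hsuv, huv⟩ :=
    (mem_nhds_iff_exists_Ioo_subset' ⟨a, hs.1⟩ ⟨t, hs.2⟩).1 hnear
  obtain ⟨hau, hvt⟩ := (Ioo_subset_Ioo_iff (hsuv.1.trans hsuv.2)).1 fun z hz => (huv hz).1
  refine ⟨u, v, hau, hsuv, hvt, le_csInf ⟨f s, mem_image_of_mem f hsuv⟩ ?_⟩
  exact forall_mem_image.2 fun z hz => (huv hz).2.le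

section Slabs

variable {S : Type*} {dS : S → S → ℝ} {f : ℝ → ℝ} {C : ℝ}

section SingleSlab

variable {d : ℝ × S → ℝ × S → ℝ} {u v : ℝ}

theorem slabDiam_le_iff {a : ℝ≥0∞} :
    slabDiam d u v ≤ a ↔ ∀ p q : ℝ × S, u < p.1 → p.1 < v → u < q.1 → q.1 < v →
      ENNReal.ofReal (d p q) ≤ a := by
  simp only [slabDiam, iSup_le_iff]

theorem SlabUpperBound.slabDiam_le {c R : ℝ} (hd : SlabUpperBound dS f C d u v) (hC : 0 ≤ C)
    (hR : ∀ x y, dS x y ≤ R) (hc : c ∈ Ioo u v) (hfc : 0 ≤ f c) :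
    slabDiam d u v ≤ ENNReal.ofReal (C * (2 * (v - u) + f c * R)) := by
  refine slabDiam_le_iff.2 fun p q hup hpv huq hqv => ENNReal.ofReal_le_ofReal ?_
  have hp : |p.1 - c| ≤ v - u := abs_le.2 ⟨by linarith [hc.2], by linarith [hc.1]⟩
  have hq : |q.1 - c| ≤ v - u := abs_le.2 ⟨by linarith [hc.2], by linarith [hc.1]⟩
  have hhor : f c * dS p.2 q.2 ≤ f c * R := mul_le_mul_of_nonneg_left (hR _ _) hfc
  calc d p q ≤ C * (|p.1 - c| + f c * dS p.2 q.2 + |q.1 - c|) :=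
        hd p q hup hpv huq hqv c hc.1 hc.2
    _ ≤ C * (2 * (v - u) + f c * R) := mul_le_mul_of_nonneg_left (by linarith) hC

theorem SlabLowerBound.ofReal_le_slabDiam (hd : SlabLowerBound dS f C d u v) (huv : u < v)
    (x y : S) :
    ENNReal.ofReal (C * (sInf (f '' Ioo u v) * dS x y)) ≤ slabDiam d u v := by
  obtain ⟨s, hus, hsv⟩ := exists_between huv
  exact (ENNReal.ofReal_le_ofReal (hd (s, x) (s, y) hus hsv hus hsv)).trans
    (slabDiam_le_iff.1 le_rfl (s, x) (s, y) hus hsv hus hsv)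

end SingleSlab

section SlabFamily

variable {D : ℝ → ℝ → ℝ × S → ℝ × S → ℝ} {t : ℝ} {b : EReal}

theorem supSlabDiam_le_iff {a : ℝ≥0∞} :
    supSlabDiam D t ≤ a ↔ ∀ u v : ℝ, 0 ≤ u → u < v → v ≤ t → slabDiam (D u v) u v ≤ a := by
  simp only [supSlabDiam, iSup_le_iff]

theorem supSlabDiam_le_of_forall_le {m R : ℝ} (hC : 0 ≤ C) (hR₀ : 0 ≤ R)
    (hR : ∀ x y, dS x y ≤ R)
    (hD : ∀ u v : ℝ, 0 ≤ u → u < v → v ≤ t → SlabUpperBound dS f C (D u v) u v)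
    (hf₀ : ∀ s ∈ Ioo 0 t, 0 ≤ f s) (hfm : ∀ s ∈ Ioo 0 t, f s ≤ m) :
    supSlabDiam D t ≤ ENNReal.ofReal (C * (2 * t + m * R)) := by
  refine supSlabDiam_le_iff.2 fun u v hu huv hvt => ?_
  obtain ⟨c, huc, hcv⟩ := exists_between huv
  have hct : c ∈ Ioo 0 t := ⟨hu.trans_lt huc, hcv.trans_le hvt⟩
  refine ((hD u v hu huv hvt).slabDiam_le hC hR ⟨huc, hcv⟩ (hf₀ c hct)).trans ?_
  gcongr
  · linarith
  · exact hfm c hct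

theorem ofReal_mul_le_supSlabDiam {s : ℝ} {x y : S} (hC : 0 ≤ C) (hxy : 0 ≤ dS x y)
    (hD : ∀ u v : ℝ, 0 ≤ u → u < v → v ≤ t → SlabLowerBound dS f C (D u v) u v)
    (hs : s ∈ Ioo 0 t) (hf : LowerSemicontinuousAt f s) :
    ENNReal.ofReal (C * (f s * dS x y)) ≤ supSlabDiam D t := by
  have hbelow : ∀ m < f s, ENNReal.ofReal (C * (m * dS x y)) ≤ supSlabDiam D t := by
    intro m hm
    obtain ⟨u, v, hu, ⟨hus, hsv⟩, hvt, hinf⟩ := exists_Ioo_le_sInf_image hf hs hm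
    have huv : u < v := hus.trans hsv
    calc ENNReal.ofReal (C * (m * dS x y))
        ≤ ENNReal.ofReal (C * (sInf (f '' Ioo u v) * dS x y)) := by gcongr
      _ ≤ slabDiam (D u v) u v := (hD u v hu huv hvt).ofReal_le_slabDiam huv x y
      _ ≤ supSlabDiam D t := supSlabDiam_le_iff.1 le_rfl u v hu huv hvt
  have hcont : Continuous fun m : ℝ => ENNReal.ofReal (C * (m * dS x y)) :=
    ENNReal.continuous_ofReal.comp (by fun_prop)
  exact le_of_tendsto (hcont.continuousWithinAt (s := Iio (f s)) (x := f s))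
    (eventually_mem_nhdsWithin.mono hbelow)

theorem tendsto_supSlabDiam_of_tendsto {R : ℝ} (hC : 0 ≤ C) (hR₀ : 0 ≤ R)
    (hR : ∀ x y, dS x y ≤ R) (hb : 0 < b) (hf₀ : ∀ t : ℝ, 0 < t → (t : EReal) < b → 0 ≤ f t)
    (hD : ∀ u v : ℝ, 0 ≤ u → u < v → (v : EReal) ≤ b → SlabUpperBound dS f C (D u v) u v)
    (hf : Tendsto f (𝓝[>] 0) (𝓝 0)) :
    Tendsto (supSlabDiam D) (𝓝[>] 0) (𝓝 0) := by
  have hbound : ∀ m > 0, ∀ᶠ t in 𝓝[>] (0 : ℝ),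
      supSlabDiam D t ≤ ENNReal.ofReal (C * (2 * m + m * R)) := by
    intro m hm
    obtain ⟨δ, hδ, hfδ⟩ := mem_nhdsGT_iff_exists_Ioo_subset.1 (hf.eventually_lt_const hm)
    filter_upwards [Ioo_mem_nhdsGT hδ, Ioo_mem_nhdsGT hm, eventually_coe_lt_nhdsGT_zero hb]
      with t htδ htm htb
    have hlt {s : ℝ} (hst : s ≤ t) : (s : EReal) < b := (EReal.coe_le_coe hst).trans_lt htb
    calc supSlabDiam D t ≤ ENNReal.ofReal (C * (2 * t + m * R)) :=
          supSlabDiam_le_of_forall_le hC hR₀ hR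
            (fun u v hu huv hvt => hD u v hu huv (hlt hvt).le)
            (fun s hs => hf₀ s hs.1 (hlt hs.2.le))
            (fun s hs => (hfδ ⟨hs.1, hs.2.trans htδ.2⟩).le)
      _ ≤ ENNReal.ofReal (C * (2 * m + m * R)) := by gcongr; exact htm.2.le
  have hzero : Tendsto (fun m : ℝ => ENNReal.ofReal (C * (2 * m + m * R))) (𝓝[>] 0) (𝓝 0) := by
    have hcont : Continuous fun m : ℝ => ENNReal.ofReal (C * (2 * m + m * R)) :=
      ENNReal.continuous_ofReal.comp (by fun_prop)
    simpa using (hcont.tendsto 0).mono_left nhdsWithin_le_nhds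
  refine ENNReal.tendsto_nhds_zero.2 fun ε hε => ?_
  obtain ⟨m, hmε, hm⟩ :=
    ((hzero.eventually_lt_const hε).and eventually_mem_nhdsWithin).exists
  exact (hbound m hm).mono fun t ht => ht.trans hmε.le

theorem tendsto_of_tendsto_supSlabDiam {x y : S} (hC : 0 < C) (hxy : 0 < dS x y) (hb : 0 < b)
    (hf₀ : ∀ t : ℝ, 0 < t → (t : EReal) < b → 0 ≤ f t)
    (hf : LowerSemicontinuousOn f {t : ℝ | 0 < t ∧ (t : EReal) < b})
    (hD : ∀ u v : ℝ, 0 ≤ u → u < v → (v : EReal) ≤ b → SlabLowerBound dS f C (D u v) u v)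
    (hdiam : Tendsto (supSlabDiam D) (𝓝[>] 0) (𝓝 0)) :
    Tendsto f (𝓝[>] 0) (𝓝 0) := by
  have hdouble : Tendsto (fun s : ℝ => 2 * s) (𝓝[>] 0) (𝓝[>] 0) :=
    tendsto_iff_comap.2 (comap_mulLeft_nhdsGT_zero two_pos).ge
  have hopen : IsOpen {t : ℝ | 0 < t ∧ (t : EReal) < b} :=
    isOpen_Ioi.inter (isOpen_Iio.preimage continuous_coe_real_ereal)
  have hbound : ∀ᶠ s in 𝓝[>] (0 : ℝ),
      0 ≤ f s ∧ ENNReal.ofReal (C * (f s * dS x y)) ≤ supSlabDiam D (2 * s) := by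
    filter_upwards [eventually_mem_nhdsWithin,
      hdouble.eventually (eventually_coe_lt_nhdsGT_zero hb)] with s (hs₀ : 0 < s) hsb
    have hlt {r : ℝ} (hr : r ≤ 2 * s) : (r : EReal) < b := (EReal.coe_le_coe hr).trans_lt hsb
    have hs : s ∈ {t : ℝ | 0 < t ∧ (t : EReal) < b} := ⟨hs₀, hlt (by linarith)⟩
    have hfs : LowerSemicontinuousAt f s := fun m hm => hopen.nhdsWithin_eq hs ▸ hf s hs m hm
    exact ⟨hf₀ s hs.1 hs.2, ofReal_mul_le_supSlabDiam hC.le hxy.le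
      (fun u v hu huv hv => hD u v hu huv (hlt hv).le) ⟨hs₀, by linarith⟩ hfs⟩
  have hscaled : Tendsto (fun s => ENNReal.ofReal (C * (f s * dS x y))) (𝓝[>] 0) (𝓝 0) :=
    tendsto_of_tendsto_of_tendsto_of_le_of_le' tendsto_const_nhds (hdiam.comp hdouble)
      (Eventually.of_forall fun _ => zero_le) (hbound.mono fun _ h => h.2)
  have hquot : Tendsto (fun s => (ENNReal.ofReal (C * (f s * dS x y))).toReal / (C * dS x y))
      (𝓝[>] 0) (𝓝 0) := by
    simpa using ((ENNReal.tendsto_toReal ENNReal.zero_ne_top).comp hscaled).div_const (C * dS x y)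
  refine hquot.congr' (hbound.mono fun s hs => ?_)
  have hfs : 0 ≤ f s := hs.1
  rw [ENNReal.toReal_ofReal (by positivity)]
  field_simp

end SlabFamily

end Slabs

theorem uniform_pinching_iff_intrinsic_diam_general {S : Type*} (dS : S → S → ℝ)
    (hSpos : ∃ x y : S, 0 < dS x y) (hSbdd : ∃ R : ℝ, ∀ x y : S, dS x y ≤ R)
    (b : EReal) (hb : 0 < b)
    (f : ℝ → ℝ) (hf₀ : ∀ t : ℝ, 0 < t → (t : EReal) < b → 0 ≤ f t)
    (hf : LowerSemicontinuousOn f {t : ℝ | 0 < t ∧ (t : EReal) < b})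
    (D : ℝ → ℝ → ℝ × S → ℝ × S → ℝ) (C₄ C₆ : ℝ) (hC₄ : 0 < C₄) (hC₆ : 0 < C₆)
    (hF4 : ∀ u v : ℝ, 0 ≤ u → u < v → (v : EReal) ≤ b → SlabUpperBound dS f C₄ (D u v) u v)
    (hF6 : ∀ u v : ℝ, 0 ≤ u → u < v → (v : EReal) ≤ b → SlabLowerBound dS f C₆ (D u v) u v) :
    Tendsto f (𝓝[>] 0) (𝓝 0) ↔ Tendsto (supSlabDiam D) (𝓝[>] 0) (𝓝 0) := by
  obtain ⟨x, y, hxy⟩ := hSpos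
  obtain ⟨R, hR⟩ := hSbdd
  exact ⟨tendsto_supSlabDiam_of_tendsto hC₄.le (hxy.le.trans (hR x y)) hR hb hf₀ hF4,
    tendsto_of_tendsto_supSlabDiam hC₆ hxy hb hf₀ hf hF6⟩

/-- Spatially finite, GRW faithful uniform pinching: for a uniformly
GRW-faithful family of intrinsic metrics `d_{(u,v)}` on the slabs `M_{(u,v)} = (u,v) × S`
(satisfying (F4) and (F6) with constants independent of `u,v`), with `0 < diam S < ∞` and
`f` continuous, the warping function tends to `0` at `0⁺` iff the supremum of the
intrinsic diameters of all slabs below time `t` tends to `0` as `t → 0⁺`. -/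
theorem uniform_pinching_iff_intrinsic_diam {S : Type*} (dS : S → S → ℝ)
    (hdS_self : ∀ x : S, dS x x = 0) (hdS_symm : ∀ x y : S, dS x y = dS y x)
    (hdS_triangle : ∀ x y z : S, dS x z ≤ dS x y + dS y z)
    (hdS_def : ∀ x y : S, dS x y = 0 → x = y)
    (hSpos : ∃ x y : S, 0 < dS x y) (hSbdd : ∃ C : ℝ, ∀ x y : S, dS x y ≤ C)
    (b : EReal) (hb : (0 : EReal) < b)
    (f : ℝ → ℝ) (hfpos : ∀ t : ℝ, 0 < t → (t : EReal) < b → 0 < f t)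
    (hfcont : ContinuousOn f {t : ℝ | 0 < t ∧ (t : EReal) < b})
    (D : ℝ → ℝ → (ℝ × S → ℝ × S → ℝ))
    (C₄ C₆ : ℝ) (hC₄ : 0 < C₄) (hC₆ : 0 < C₆)
    (hmetric : ∀ u v : ℝ, 0 ≤ u → u < v → (v : EReal) ≤ b →
      (∀ p : ℝ × S, u < p.1 → p.1 < v → D u v p p = 0) ∧
      (∀ p q : ℝ × S, u < p.1 → p.1 < v → u < q.1 → q.1 < v →
        (0 ≤ D u v p q ∧ D u v p q = D u v q p ∧ (D u v p q = 0 → p = q))) ∧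
      (∀ p q r : ℝ × S, u < p.1 → p.1 < v → u < q.1 → q.1 < v → u < r.1 → r.1 < v →
        D u v p r ≤ D u v p q + D u v q r))
    (hF4 : ∀ u v : ℝ, 0 ≤ u → u < v → (v : EReal) ≤ b →
      ∀ p q : ℝ × S, u < p.1 → p.1 < v → u < q.1 → q.1 < v → ∀ c : ℝ, u < c → c < v →
        D u v p q ≤ C₄ * (|p.1 - c| + f c * dS p.2 q.2 + |q.1 - c|))
    (hF6 : ∀ u v : ℝ, 0 ≤ u → u < v → (v : EReal) ≤ b →
      ∀ t₁ t₂ : ℝ, u ≤ t₁ → t₁ < t₂ → t₂ ≤ v →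
      ∀ p q : ℝ × S, t₁ < p.1 → p.1 < t₂ → t₁ < q.1 → q.1 < t₂ →
        (C₆ : EReal) * min (exitCost (u : EReal) (v : EReal) t₁ t₂ p.1 q.1)
          ((sInf (f '' Set.Ioo t₁ t₂) * dS p.2 q.2 : ℝ) : EReal) ≤ ((D u v p q : ℝ) : EReal)) :
    Tendsto f (𝓝[>] (0 : ℝ)) (𝓝 0) ↔
    Tendsto (fun t : ℝ => ⨆ (u : ℝ) (v : ℝ) (_ : 0 ≤ u) (_ : u < v) (_ : v ≤ t),
        ⨆ (p : ℝ × S) (q : ℝ × S) (_ : u < p.1) (_ : p.1 < v) (_ : u < q.1) (_ : q.1 < v),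
          ENNReal.ofReal (D u v p q))
      (𝓝[>] (0 : ℝ)) (𝓝 0) := by
  refine uniform_pinching_iff_intrinsic_diam_general dS hSpos hSbdd b hb f
    (fun t ht htb => (hfpos t ht htb).le) hfcont.lowerSemicontinuousOn D C₄ C₆ hC₄ hC₆ hF4
    fun u v hu huv hv p q hup hpv huq hqv => ?_
  simpa [exitCost_self, ← EReal.coe_mul] using
    hF6 u v hu huv hv u v le_rfl huv le_rfl p q hup hpv huq hqv
end

section
/- Let d be a metric on M = (0,b) × S as in the past-finite GRW setup, with S nonempty, and suppose d satisfies (F2). Let (M̄, d̄) denote the metric completion of (M,d), with M identified with its dense image, and suppose the time function τ(t,x) = t admits a continuous extension τ̄ : M̄ → ℝ. Then the 'initial singularity' τ̄⁻¹(0) is a nonempty subset of M̄ ∖ M: there exists x̄ ∈ M̄ with τ̄(x̄) = 0, and every such x̄ lies outside the image of M. -/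
open Filter Topology

/-!
By (F2) the line `t ↦ (t, s)` is Lipschitz for the metric `d`, so along it points with `t → 0`
form a Cauchy filter. Its limit exists in `M̄`, and `τ̄` vanishes there by continuity. No point of
`M` itself lies in `τ̄⁻¹(0)`, since `τ` is positive on `M`.
-/

theorem closure_range_comp_subset_range {α β γ : Type*} [UniformSpace α] [UniformSpace β]
    [T2Space β] [UniformSpace γ] [CompleteSpace γ] {f : α → γ} {φ : γ → β}
    (hf : UniformContinuous f) (hφ : Continuous φ) (hφf : IsUniformInducing (φ ∘ f)) :
    closure (Set.range (φ ∘ f)) ⊆ Set.range φ := by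
  intro a ha
  have : (comap (φ ∘ f) (𝓝 a)).NeBot :=
    comap_neBot_iff_frequently.2 (mem_closure_iff_frequently.1 ha)
  obtain ⟨x, hx⟩ := cauchy_map_iff_exists_tendsto.1
    (((cauchy_nhds (a := a)).comap hφf.comap_uniformity.le).map hf)
  exact ⟨x, tendsto_nhds_unique ((hφ.tendsto x).comp hx) tendsto_comap⟩

theorem zero_mem_closure_setOf_pos_coe_lt {b : EReal} (hb : 0 < b) :
    (0 : ℝ) ∈ closure {t : ℝ | 0 < t ∧ (t : EReal) < b} := by
  obtain ⟨c, hc, hcb⟩ := EReal.lt_iff_exists_real_btwn.1 hb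
  have hc : 0 < c := EReal.coe_pos.1 hc
  have hsub : Set.Ioo 0 c ⊆ {t : ℝ | 0 < t ∧ (t : EReal) < b} := fun _ ht =>
    ⟨ht.1, (EReal.coe_lt_coe ht.2).trans hcb⟩
  refine closure_mono hsub ?_
  rw [closure_Ioo hc.ne]
  exact Set.left_mem_Icc.2 hc.le

theorem lipschitzWith_timeLine {b : EReal} {S X : Type*} [PseudoMetricSpace X]
    {ι : GRWPoint0 b S → X} {C : ℝ}
    (hF2 : ∀ p q, p.2 = q.2 → dist (ι p) (ι q) ≤ C * |(q.1 : ℝ) - (p.1 : ℝ)|) (s : S) :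
    LipschitzWith C.toNNReal fun t => ι (t, s) :=
  LipschitzWith.of_dist_le' fun t u => by
    rw [Subtype.dist_eq, dist_comm (t : ℝ), Real.dist_eq]
    exact hF2 (t, s) (u, s) rfl

theorem initial_singularity_nonempty_general {b : EReal} (hb : 0 < b) {S X : Type*}
    [UniformSpace X] [CompleteSpace X] {ι : GRWPoint0 b S → X} {s : S}
    (hι : UniformContinuous fun t => ι (t, s)) {τbar : X → ℝ} (hτcont : Continuous τbar)
    (hτext : ∀ p, τbar (ι p) = (p.1 : ℝ)) :
    (∃ x, τbar x = 0) ∧ ∀ x, τbar x = 0 → x ∉ Set.range ι := by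
  constructor
  · have hτι : (τbar ∘ fun t => ι (t, s)) = Subtype.val := funext fun t => hτext (t, s)
    refine closure_range_comp_subset_range hι hτcont (hτι ▸ isUniformInducing_val _) ?_
    rw [hτι, Subtype.range_coe_subtype]
    exact zero_mem_closure_setOf_pos_coe_lt hb
  · rintro _ hx ⟨p, rfl⟩
    exact p.1.2.1.ne' ((hτext p).symm.trans hx)

/-- For a distance satisfying (F2) on a past-finite GRW spacetime, the
initial singularity `τ̄⁻¹(0)` in the metric completion is a nonempty subset of
`M̄ ∖ M`. -/
theorem initial_singularity_nonempty {S : Type*} [Nonempty S]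
    (dS : S → S → ℝ) (hdS : IsMetric dS)
    (b : EReal) (hb : (0 : EReal) < b)
    (f : ℝ → ℝ) (hf : ∀ t : ℝ, 0 < t → (t : EReal) < b → 0 < f t)
    (d : GRWPoint0 b S → GRWPoint0 b S → ℝ) (hd : IsMetric d)
    (C₂ : ℝ) (hC₂ : 0 < C₂)
    (hF2 : ∀ p q : GRWPoint0 b S, p.2 = q.2 → d p q ≤ C₂ * |(q.1 : ℝ) - (p.1 : ℝ)|)
    {Mbar : Type*} [MetricSpace Mbar] [CompleteSpace Mbar]
    (ι : GRWPoint0 b S → Mbar) (hdense : DenseRange ι)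
    (hiso : ∀ p q : GRWPoint0 b S, dist (ι p) (ι q) = d p q)
    (τbar : Mbar → ℝ) (hτcont : Continuous τbar)
    (hτext : ∀ p : GRWPoint0 b S, τbar (ι p) = (p.1 : ℝ)) :
    (∃ x : Mbar, τbar x = 0) ∧ (∀ x : Mbar, τbar x = 0 → x ∉ Set.range ι) := by
  have hline := lipschitzWith_timeLine fun p q h => (hiso p q).trans_le (hF2 p q h)
  exact initial_singularity_nonempty_general hb (hline (Classical.arbitrary S)).uniformContinuous
    hτcont hτext
end
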